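/- Let X be a finite set, d ≥ 1 and r ≥ 1 integers, and let F ⊆ C(X,r)^d be a d-dimensional r-uniform family whose size satisfies |F| = C(x,r)^d for some real number x ≥ r. Then the shadow of F satisfies |∂F| ≥ C(x,r−1)^d. -/

import Mathlib

/-!
Write `r = n + 1`, `a = C(x, r)` and `b = C(x, r - 1)`. The case `r = 1` is immediate, since then
`b = 1`. For `r ≥ 2` the proof replaces the one-dimensional theorem of Lovász by a power inequality
that is tangent to it at the given `x` and that, unlike the theorem itself, tensorizes.

* One dimension (`lovasz_local`). If `|∂F| < C(y, r - 1)` then `r |F| ≤ (y - r + 1) |∂F|`; the proof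
  compares, for every point `v`, the degree of `v` in `F` with its degree in `∂F`.
* Power inequality (`card_le_mul_rpow`). Put `B = ∑_{i < r - 1} (x - r + 1) / (x - i)` and
  `p = 1 + 1 / B`. Weighted AM-GM bounds each factor `(y - i) / (x - i)` of `C(y, r - 1) / b` below
  by a power of `s = (y - r + 1) / (x - r + 1)`, so `C(y, r - 1) ≥ b s ^ B`. With `lovasz_local` this
  gives `|F| ≤ a (|∂F| / b) ^ p` for every `r`-uniform `F`, with equality at `|F| = a`, `|∂F| = b`.
* Tensorization (`ncard_le_pow_mul_rpow`). Slicing into level sets and Minkowski's inequality in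
  `ℓ^p` extend `|F| ≤ N |∂F| ^ p` from families to functions (`sum_rpow_le_of_shadow_le`). Applied
  to the sizes of the shadows of the fibres over the first coordinate, this yields by induction on
  `d` that `|F| ≤ N ^ d |∂F| ^ p`. For `N = a / b ^ p` and `|F| = a ^ d` this says `|∂F| ≥ b ^ d`.
-/

/-- The generalized binomial coefficient `C(x, r) = x (x-1) ⋯ (x-r+1) / r!` for real `x`. -/
noncomputable def realChoose (x : ℝ) (r : ℕ) : ℝ :=
  (∏ i ∈ Finset.range r, (x - i)) / (Nat.factorial r : ℝ)

/-- The shadow of a `d`-dimensional uniform family: all tuples obtained from a tuple in `F`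
by removing one element from each coordinate. -/
def multiShadow {α : Type*} [DecidableEq α] (d : ℕ) (F : Set (Fin d → Finset α)) :
    Set (Fin d → Finset α) :=
  {T | ∃ S ∈ F, ∃ x : Fin d → α, (∀ i, x i ∈ S i) ∧ ∀ i, T i = (S i).erase (x i)}

open scoped FinsetFamily

/-! ### Real binomial coefficients -/

lemma realChoose_zero (x : ℝ) : realChoose x 0 = 1 := by simp [realChoose]

lemma realChoose_succ (x : ℝ) (n : ℕ) :
    realChoose x (n + 1) = realChoose x n * (x - n) / (n + 1) := by
  simp only [realChoose, Finset.prod_range_succ, Nat.factorial_succ, Nat.cast_mul, Nat.cast_add,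
    Nat.cast_one]
  have : (n.factorial : ℝ) ≠ 0 := by positivity
  field_simp

lemma succ_mul_realChoose_succ (x : ℝ) (n : ℕ) :
    (n + 1) * realChoose x (n + 1) = x * realChoose (x - 1) n := by
  simp only [realChoose, Finset.prod_range_succ', Nat.factorial_succ, Nat.cast_mul, Nat.cast_add,
    Nat.cast_one, Nat.cast_zero, sub_zero]
  have h : ∀ i : ℕ, x - (i + 1 : ℝ) = x - 1 - i := fun i => by ring
  simp only [h]
  have : (n.factorial : ℝ) ≠ 0 := by positivity
  field_simp

lemma realChoose_pos {x : ℝ} {n : ℕ} (hx : (n : ℝ) ≤ x) : 0 < realChoose x n := by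
  refine div_pos (Finset.prod_pos fun i hi => ?_) (by positivity)
  have : (i : ℝ) < n := by exact_mod_cast Finset.mem_range.1 hi
  linarith

/-! ### The one-dimensional inequality -/

section OneDim

variable {X : Type*} [Fintype X] [DecidableEq X]

/-- Double counting of the pairs `v ∈ S ∈ F`. -/
lemma sum_card_memberSubfamily (F : Finset (Finset X)) {n : ℕ} (hF : ∀ S ∈ F, S.card = n) :
    ∑ v, ((F.memberSubfamily v).card : ℝ) = n * F.card := by
  have h : ∀ v, (F.memberSubfamily v).card = (F.filter (v ∈ ·)).card := by
    intro v
    rw [← Finset.image_insert_memberSubfamily, Finset.card_image_of_injOn]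
    intro s hs t ht hst
    simp only [Finset.mem_coe, Finset.mem_memberSubfamily] at hs ht
    rw [← Finset.erase_insert hs.2, ← Finset.erase_insert ht.2]
    exact congrArg (Finset.erase · v) hst
  have h2 : ∑ v, (F.filter (v ∈ ·)).card = ∑ S ∈ F, S.card := by
    simp only [Finset.card_filter]
    rw [Finset.sum_comm]
    exact Finset.sum_congr rfl fun S _ => by simp
  rw [Finset.sum_congr rfl hF, Finset.sum_const, smul_eq_mul] at h2
  simp only [h]
  exact_mod_cast h2.trans (mul_comm _ _)

/-- A form of Lovász's theorem for `(n + 1)`-uniform families. The induction compares degrees: at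
each `v` the link of `F` has its shadow inside the link of `∂F`, and is itself a set of members of
`∂F` avoiding `v`. The first inclusion serves when the degree of `v` in `∂F` is less than
`C(x - 1, n)`, the second one otherwise. The strict inequality in the hypothesis makes the
statement true already for `n = 0`, where it forces `F` to be empty. -/
lemma lovasz_local (n : ℕ) : ∀ (F : Finset (Finset X)), (∀ S ∈ F, S.card = n + 1) →
    ∀ x : ℝ, (n : ℝ) ≤ x → ((∂ F).card : ℝ) < realChoose x n →
      (n + 1) * (F.card : ℝ) ≤ (x - n) * (∂ F).card := by
  induction n with
  | zero =>
    intro F hF x hx h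
    rw [realChoose_zero] at h
    have h0 : ∂ F = ∅ := by
      rw [← Finset.card_eq_zero]
      have : (∂ F).card < 1 := by exact_mod_cast h
      omega
    have hF0 : F = ∅ := by
      refine Finset.eq_empty_of_forall_notMem fun S hS => ?_
      obtain ⟨v, hv⟩ := Finset.card_pos.1 (by rw [hF S hS]; omega : 0 < S.card)
      have := Finset.erase_mem_shadow hS hv
      simp [h0] at this
    simp [hF0]
  | succ n ih =>
    intro F hF x hx h
    push_cast at hx ⊢
    have key : ∀ v, ((n : ℝ) + 1) * ((F.memberSubfamily v).card : ℝ) ≤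
        (x - (n + 1)) * ((∂ F).memberSubfamily v).card := by
      intro v
      have h1 : (∂ (F.memberSubfamily v)).card ≤ ((∂ F).memberSubfamily v).card := by
        refine Finset.card_le_card fun T hT => ?_
        obtain ⟨w, hw, hT⟩ := Finset.mem_shadow_iff_insert_mem.1 hT
        rw [Finset.mem_memberSubfamily] at hT ⊢
        simp only [Finset.mem_insert, not_or] at hT
        refine ⟨Finset.mem_shadow_iff_insert_mem.2 ⟨w, ?_, ?_⟩, hT.2.2⟩
        · simp only [Finset.mem_insert, not_or]
          exact ⟨fun h => hT.2.1 h.symm, hw⟩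
        · rw [Finset.insert_comm]
          exact hT.1
      have h2 : (F.memberSubfamily v).card ≤ ((∂ F).nonMemberSubfamily v).card := by
        refine Finset.card_le_card fun T hT => ?_
        rw [Finset.mem_memberSubfamily] at hT
        exact Finset.mem_nonMemberSubfamily.2
          ⟨Finset.mem_shadow_iff_insert_mem.2 ⟨v, hT.2, hT.1⟩, hT.2⟩
      have h3 := Finset.card_memberSubfamily_add_card_nonMemberSubfamily v (∂ F)
      have h1' : ((∂ (F.memberSubfamily v)).card : ℝ) ≤ ((∂ F).memberSubfamily v).card := by
        exact_mod_cast h1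
      have h23 : ((F.memberSubfamily v).card : ℝ) + ((∂ F).memberSubfamily v).card ≤
          (∂ F).card := by
        exact_mod_cast (by omega : (F.memberSubfamily v).card + ((∂ F).memberSubfamily v).card ≤
          (∂ F).card)
      rcases lt_or_ge (((∂ F).memberSubfamily v).card : ℝ) (realChoose (x - 1) n) with hlt | hge
      · have h4 := ih (F.memberSubfamily v) (fun S hS => by
          rw [Finset.mem_memberSubfamily] at hS
          have := hF _ hS.1
          rw [Finset.card_insert_of_notMem hS.2] at this
          omega) (x - 1) (by linarith) (h1'.trans_lt hlt)
        have h5 := mul_le_mul_of_nonneg_left h1' (by linarith : (0 : ℝ) ≤ x - (n + 1))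
        linarith
      · have hn : (0 : ℝ) ≤ n := n.cast_nonneg
        have h4 := succ_mul_realChoose_succ x n
        have h5 := mul_le_mul_of_nonneg_left hge (by linarith : (0 : ℝ) ≤ x)
        have h6 := mul_le_mul_of_nonneg_left (h23.trans h.le) (by linarith : (0 : ℝ) ≤ n + 1)
        linarith
    have hsum := Finset.sum_le_sum fun v (_ : v ∈ Finset.univ) => key v
    rw [← Finset.mul_sum, ← Finset.mul_sum, sum_card_memberSubfamily F hF,
      sum_card_memberSubfamily (n := n + 1) (∂ F)] at hsum
    · push_cast at hsum
      have hn : (0 : ℝ) < (n : ℝ) + 1 := by positivity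
      refine le_of_mul_le_mul_left ?_ hn
      linarith
    · intro T hT
      obtain ⟨S, hS, v, hv, rfl⟩ := Finset.mem_shadow_iff.1 hT
      rw [Finset.card_erase_of_mem hv, hF S hS]
      rfl

/-- Weighted AM-GM for each factor `(y - i) / (x - i)`, where `y - n = s (x - n)`: it is the mean
of `s` and `1` with weights `(x - n) / (x - i)` and `(n - i) / (x - i)`. -/
lemma rpow_mul_realChoose_le {n : ℕ} {x s : ℝ} (hx : (n : ℝ) < x) (hs : 0 < s) :
    s ^ (∑ i ∈ Finset.range n, (x - n) / (x - i)) * realChoose x n ≤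
      realChoose (n + s * (x - n)) n := by
  rw [Real.rpow_sum_of_pos hs]
  simp only [realChoose]
  rw [← mul_div_assoc, ← Finset.prod_mul_distrib]
  gcongr with i hi
  · intro i hi
    have hi' : (i : ℝ) < n := by exact_mod_cast Finset.mem_range.1 hi
    exact mul_nonneg (Real.rpow_nonneg hs.le _) (by linarith)
  · have hi' : (i : ℝ) < n := by exact_mod_cast Finset.mem_range.1 hi
    have hxi : 0 < x - i := by linarith
    have h := Real.geom_mean_le_arith_mean2_weighted (w₁ := (x - n) / (x - i))
      (w₂ := (n - i) / (x - i)) (p₁ := s) (p₂ := 1) (div_nonneg (by linarith) hxi.le)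
      (div_nonneg (by linarith) hxi.le) hs.le zero_le_one (by field_simp; ring)
    rw [Real.one_rpow, mul_one] at h
    calc s ^ ((x - n) / (x - i)) * (x - i)
        ≤ ((x - n) / (x - i) * s + (n - i) / (x - i) * 1) * (x - i) := by gcongr
      _ = n + s * (x - n) - i := by field_simp; ring

/-- The power inequality `|F| ≤ a (|∂F| / b) ^ p` with `a = C(x, n + 1)`, `b = C(x, n)` and
`p = 1 + 1 / B`. -/
lemma card_le_mul_rpow {n : ℕ} {x B : ℝ} (hx : (n : ℝ) < x) (hB : 0 < B)
    (hBdef : B = ∑ i ∈ Finset.range n, (x - n) / (x - i))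
    (F : Finset (Finset X)) (hF : ∀ S ∈ F, S.card = n + 1) :
    (F.card : ℝ) ≤ realChoose x (n + 1) / realChoose x n ^ (1 + 1 / B) *
      ((∂ F).card : ℝ) ^ (1 + 1 / B) := by
  have hb : 0 < realChoose x n := realChoose_pos hx.le
  set b := realChoose x n with hbdef
  set m : ℝ := ((∂ F).card : ℝ) with hm
  have hm0 : 0 ≤ m := Nat.cast_nonneg _
  set q := m / b with hq
  have hq0 : 0 ≤ q := by positivity
  have hxn : 0 < x - n := by linarith
  -- `s₀ = q ^ (1 / B)` is the critical value of `s`: past it `b s ^ B` exceeds `|∂F|`.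
  have hs : ∀ s, q ^ (1 / B) < s → (n + 1) * (F.card : ℝ) ≤ s * (x - n) * m := by
    intro s hs
    have hs0 : 0 < s := (Real.rpow_nonneg hq0 _).trans_lt hs
    have h1 : q < s ^ B := by
      have := Real.rpow_lt_rpow (Real.rpow_nonneg hq0 _) hs hB
      rwa [← Real.rpow_mul hq0, one_div_mul_cancel hB.ne', Real.rpow_one] at this
    have h2 := rpow_mul_realChoose_le hx hs0
    rw [← hBdef, ← hbdef] at h2
    have h3 := lovasz_local n F hF (n + s * (x - n)) (by nlinarith)
      ((lt_of_eq_of_lt (by rw [hq]; field_simp : m = q * b)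
        (mul_lt_mul_of_pos_right h1 hb)).trans_le h2)
    linarith
  have hlim : (n + 1) * (F.card : ℝ) ≤ q ^ (1 / B) * (x - n) * m := by
    have ht : Filter.Tendsto (fun s : ℝ => s * (x - n) * m)
        (nhdsWithin (q ^ (1 / B)) (Set.Ioi (q ^ (1 / B)))) (nhds (q ^ (1 / B) * (x - n) * m)) :=
      ((by fun_prop : Continuous fun s : ℝ => s * (x - n) * m).tendsto _).mono_left
        nhdsWithin_le_nhds
    exact ge_of_tendsto ht (Filter.eventually_of_mem self_mem_nhdsWithin hs)
  have hrw : realChoose x (n + 1) / b ^ (1 + 1 / B) * m ^ (1 + 1 / B)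
      = realChoose x (n + 1) * (q * q ^ (1 / B)) := by
    have : q * q ^ (1 / B) = q ^ (1 + 1 / B) := by
      rw [Real.rpow_add_of_nonneg hq0 zero_le_one (by positivity), Real.rpow_one]
    rw [this, hq, Real.div_rpow hm0 hb.le]
    ring
  rw [hrw, realChoose_succ, ← hbdef]
  have hmq : m = q * b := by rw [hq]; field_simp
  rw [hmq] at hlim
  have hn : (0 : ℝ) < n + 1 := by positivity
  rw [div_mul_eq_mul_div, le_div_iff₀ hn]
  linarith

/-! ### Tensorization -/

lemma Lp_sum_le {ι κ : Type*} (s : Finset ι) (t : Finset κ) (f : κ → ι → ℝ) {p : ℝ} (hp : 1 ≤ p)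
    (hf : ∀ k i, 0 ≤ f k i) :
    (∑ i ∈ s, (∑ k ∈ t, f k i) ^ p) ^ (1 / p) ≤ ∑ k ∈ t, (∑ i ∈ s, f k i ^ p) ^ (1 / p) := by
  have hp0 : p ≠ 0 := by linarith
  have := Finset.le_sum_of_subadditive_on_pred
    (fun g : ι → ℝ => (∑ i ∈ s, g i ^ p) ^ (1 / p)) (fun g => ∀ i, 0 ≤ g i)
    (by simp [Real.zero_rpow hp0, Real.zero_rpow (inv_ne_zero hp0)])
    (fun g h hg hh => Real.Lp_add_le_of_nonneg s hp (fun i _ => hg i) (fun i _ => hh i))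
    (fun g h hg hh i => add_nonneg (hg i) (hh i)) f (s := t) (fun k _ => hf k)
  simpa only [Finset.sum_apply] using this

/-- Layer-cake formula for a function with values in `ℕ`. -/
lemma sum_range_ite_lt {M m : ℕ} (h : m ≤ M) :
    ∑ k ∈ Finset.range M, (if k < m then (1 : ℝ) else 0) = m := by
  rw [← Finset.sum_filter, Finset.sum_const, nsmul_eq_mul, mul_one]
  congr 1
  have : (Finset.range M).filter (· < m) = Finset.range m := by
    ext k; simp only [Finset.mem_filter, Finset.mem_range]; omega
  rw [this, Finset.card_range]

/-- The functional form of `|F| ≤ N |∂F| ^ p`, with `h` dominating the shadow of `g`. -/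
lemma sum_rpow_le_of_shadow_le {r : ℕ} (hr : 1 ≤ r) {N p : ℝ} (hN : 0 ≤ N) (hp : 1 ≤ p)
    (hNp : ∀ F : Finset (Finset X), (∀ S ∈ F, S.card = r) →
      (F.card : ℝ) ≤ N * ((∂ F).card : ℝ) ^ p)
    (g h : Finset X → ℕ) (hg : ∀ S, S.card ≠ r → g S = 0)
    (hgh : ∀ S, ∀ v ∈ S, g S ≤ h (S.erase v)) :
    ∑ S, (g S : ℝ) ^ p ≤ N * (∑ T, (h T : ℝ)) ^ p := by
  have hp0 : 0 < p := by linarith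
  set M := ∑ T, h T with hM
  have hhM : ∀ T, h T ≤ M := fun T =>
    Finset.single_le_sum (fun _ _ => Nat.zero_le _) (Finset.mem_univ T)
  have hgM : ∀ S, g S ≤ M := by
    intro S
    by_cases hS : S.card = r
    · obtain ⟨v, hv⟩ := Finset.card_pos.1 (by omega : 0 < S.card)
      exact (hgh S v hv).trans (hhM _)
    · rw [hg S hS]; exact Nat.zero_le _
  have hmink := Lp_sum_le (Finset.univ : Finset (Finset X)) (Finset.range M)
    (fun k S => if k < g S then (1 : ℝ) else 0) hp (fun k S => by split_ifs <;> norm_num)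
  simp only [fun S => sum_range_ite_lt (hgM S)] at hmink
  have hlevel : ∀ k, (∑ S, (if k < g S then (1 : ℝ) else 0) ^ p) ^ (1 / p) ≤
      N ^ (1 / p) * ∑ T, (if k < h T then (1 : ℝ) else 0) := by
    intro k
    have h1 : ∑ S, (if k < g S then (1 : ℝ) else 0) ^ p =
        ((Finset.univ.filter fun S => k < g S).card : ℝ) := by
      rw [Finset.card_filter]
      push_cast
      refine Finset.sum_congr rfl fun S _ => ?_
      split_ifs
      · exact Real.one_rpow p
      · exact Real.zero_rpow hp0.ne'
    have h2 : ∑ T, (if k < h T then (1 : ℝ) else 0) =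
        ((Finset.univ.filter fun T => k < h T).card : ℝ) := by
      rw [Finset.card_filter]; push_cast; rfl
    have h3 := hNp (Finset.univ.filter fun S => k < g S) (by
      intro S hS
      by_contra hne
      have := hg S hne
      simp [this] at hS)
    have h4 : (∂ (Finset.univ.filter fun S => k < g S)).card ≤
        (Finset.univ.filter fun T => k < h T).card := by
      refine Finset.card_le_card fun T hT => ?_
      obtain ⟨S, hS, v, hv, rfl⟩ := Finset.mem_shadow_iff.1 hT
      simp only [Finset.mem_filter, Finset.mem_univ, true_and] at hS ⊢
      exact hS.trans_le (hgh S v hv)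
    have h4' : ((∂ (Finset.univ.filter fun S => k < g S)).card : ℝ) ≤
        (Finset.univ.filter fun T => k < h T).card := by exact_mod_cast h4
    rw [h1, h2]
    calc _ ≤ (N * ((Finset.univ.filter fun T => k < h T).card : ℝ) ^ p) ^ (1 / p) := by
            refine Real.rpow_le_rpow (by positivity) (h3.trans ?_) (by positivity)
            gcongr
      _ = _ := by
            rw [Real.mul_rpow hN (by positivity), ← Real.rpow_mul (by positivity),
              mul_one_div_cancel hp0.ne', Real.rpow_one]
  have hfin : (∑ S, (g S : ℝ) ^ p) ^ (1 / p) ≤ N ^ (1 / p) * ∑ T, (h T : ℝ) := by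
    refine hmink.trans ((Finset.sum_le_sum fun k _ => hlevel k).trans_eq ?_)
    rw [← Finset.mul_sum, Finset.sum_comm]
    simp only [fun T => sum_range_ite_lt (hhM T)]
  have h5 := Real.rpow_le_rpow (by positivity) hfin hp0.le
  rwa [← Real.rpow_mul (by positivity), one_div_mul_cancel hp0.ne', Real.rpow_one,
    Real.mul_rpow (by positivity) (by positivity), ← Real.rpow_mul hN,
    one_div_mul_cancel hp0.ne', Real.rpow_one] at h5

lemma ncard_eq_sum_fibre {d : ℕ} (F : Set (Fin (d + 1) → Finset X)) :
    F.ncard = ∑ S, {t : Fin d → Finset X | (Fin.cons S t : Fin (d + 1) → Finset X) ∈ F}.ncard := by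
  classical
  have e : F ≃ Σ S : Finset X,
      {t : Fin d → Finset X | (Fin.cons S t : Fin (d + 1) → Finset X) ∈ F} :=
    { toFun := fun f => ⟨f.1 0, Fin.tail f.1, by
        simp⟩
      invFun := fun q => ⟨Fin.cons q.1 q.2.1, q.2.2⟩
      left_inv := fun f => by simp
      right_inv := fun ⟨S, t, ht⟩ => rfl }
  simp only [← Nat.card_coe_set_eq]
  rw [Nat.card_congr e, Nat.card_sigma]

/-- The fibre over `S \ {v}` of the shadow contains the shadow of the fibre over `S`. -/
lemma multiShadow_fibre_subset {d : ℕ} (F : Set (Fin (d + 1) → Finset X)) {S : Finset X} {v : X}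
    (hv : v ∈ S) :
    multiShadow d {t | (Fin.cons S t : Fin (d + 1) → Finset X) ∈ F} ⊆
      {t | (Fin.cons (S.erase v) t : Fin (d + 1) → Finset X) ∈ multiShadow (d + 1) F} := by
  rintro T ⟨t, ht, y, hy, hT⟩
  refine ⟨Fin.cons S t, ht, Fin.cons v y, fun i => ?_, fun i => ?_⟩
  · cases i using Fin.cases <;> simp [hv, hy]
  · cases i using Fin.cases <;> simp [hT]

/-- The exponent `p` does not grow with the dimension, only the constant does. -/
lemma ncard_le_pow_mul_rpow {r : ℕ} (hr : 1 ≤ r) {N p : ℝ} (hN : 0 ≤ N) (hp : 1 ≤ p)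
    (hNp : ∀ F : Finset (Finset X), (∀ S ∈ F, S.card = r) →
      (F.card : ℝ) ≤ N * ((∂ F).card : ℝ) ^ p) (d : ℕ) :
    ∀ F : Set (Fin d → Finset X), (∀ S ∈ F, ∀ i, (S i).card = r) →
      (F.ncard : ℝ) ≤ N ^ d * ((multiShadow d F).ncard : ℝ) ^ p := by
  induction d with
  | zero =>
    intro F hF
    -- Families of empty tuples have at most one member, and are their own shadows.
    have h1 : F.ncard ≤ 1 := Set.ncard_le_one_of_subsingleton F
    rcases Set.eq_empty_or_nonempty F with rfl | ⟨S, hS⟩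
    · simp only [Set.ncard_empty, Nat.cast_zero]
      positivity
    · have h2 : 0 < (multiShadow 0 F).ncard :=
        (Set.ncard_pos).2 ⟨S, S, hS, fun i => i.elim0, fun i => i.elim0, fun i => i.elim0⟩
      have h3 : (1 : ℝ) ≤ (multiShadow 0 F).ncard := by exact_mod_cast h2
      have h4 : (F.ncard : ℝ) ≤ 1 := by exact_mod_cast h1
      rw [pow_zero, one_mul]
      exact h4.trans (Real.one_le_rpow h3 (by linarith))
  | succ d ih =>
    intro F hF
    set fib : Finset X → Set (Fin d → Finset X) := fun S =>
      {t | (Fin.cons S t : Fin (d + 1) → Finset X) ∈ F} with hfib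
    have hcard : ∀ S, (((fib S).ncard : ℕ) : ℝ) ≤
        N ^ d * ((multiShadow d (fib S)).ncard : ℝ) ^ p := fun S =>
      ih (fib S) fun t ht i => by simpa using hF _ ht i.succ
    have hfun := sum_rpow_le_of_shadow_le hr hN hp hNp
      (fun S => (multiShadow d (fib S)).ncard)
      (fun T => {t : Fin d → Finset X |
        (Fin.cons T t : Fin (d + 1) → Finset X) ∈ multiShadow (d + 1) F}.ncard)
      (fun S hS => by
        rw [Set.ncard_eq_zero, Set.eq_empty_iff_forall_notMem]
        rintro T ⟨t, ht, -⟩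
        exact hS (by simpa using hF _ ht 0))
      (fun S v hv => Set.ncard_le_ncard (multiShadow_fibre_subset F hv))
    have hshadow := ncard_eq_sum_fibre (multiShadow (d + 1) F)
    rw [ncard_eq_sum_fibre F, hshadow]
    push_cast
    calc _ ≤ ∑ S, N ^ d * ((multiShadow d (fib S)).ncard : ℝ) ^ p :=
            Finset.sum_le_sum fun S _ => hcard S
      _ = N ^ d * ∑ S, ((multiShadow d (fib S)).ncard : ℝ) ^ p := by rw [Finset.mul_sum]
      _ ≤ _ := by
            rw [pow_succ, mul_assoc]
            gcongr

end OneDim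

theorem stmt0 {X : Type*} [Fintype X] [DecidableEq X] (d r : ℕ) (hd : 1 ≤ d) (hr : 1 ≤ r)
    (F : Set (Fin d → Finset X)) (hF : ∀ S ∈ F, ∀ i, (S i).card = r)
    (x : ℝ) (hx : (r : ℝ) ≤ x) (hsize : (F.ncard : ℝ) = realChoose x r ^ d) :
    realChoose x (r - 1) ^ d ≤ ((multiShadow d F).ncard : ℝ) := by
  obtain ⟨n, rfl⟩ : ∃ n, r = n + 1 := ⟨r - 1, by omega⟩
  have ha : 0 < realChoose x (n + 1) := realChoose_pos hx
  have hxn : (n : ℝ) < x := by push_cast at hx; linarith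
  have hb : 0 < realChoose x n := realChoose_pos hxn.le
  rw [Nat.add_sub_cancel]
  rcases Nat.eq_zero_or_pos n with rfl | hn
  · -- For `r = 1` the bound is `1`, and `F` is nonempty because `|F| > 0`.
    rw [realChoose_zero, one_pow]
    have hpos : 0 < F.ncard := by
      have : (0 : ℝ) < F.ncard := by rw [hsize]; positivity
      exact_mod_cast this
    obtain ⟨S, hS⟩ := Set.nonempty_of_ncard_ne_zero hpos.ne'
    have hne : ∀ i, ∃ v, v ∈ S i := fun i =>
      Finset.card_pos.1 (by rw [hF S hS i]; omega : 0 < (S i).card)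
    choose y hy using hne
    have : 0 < (multiShadow d F).ncard :=
      (Set.ncard_pos).2 ⟨fun i => (S i).erase (y i), S, hS, y, hy, fun i => rfl⟩
    exact_mod_cast this
  · obtain ⟨B, hBdef⟩ : ∃ B, B = ∑ i ∈ Finset.range n, (x - n) / (x - i) := ⟨_, rfl⟩
    have hB : 0 < B := by
      rw [hBdef]
      refine Finset.sum_pos (fun i hi => ?_) ⟨0, Finset.mem_range.2 hn⟩
      have hi' : (i : ℝ) < n := by exact_mod_cast Finset.mem_range.1 hi
      exact div_pos (by linarith) (by linarith)
    have hp : (1 : ℝ) ≤ 1 + 1 / B := by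
      have : 0 < 1 / B := by positivity
      linarith
    have h := ncard_le_pow_mul_rpow hr (by positivity) hp
      (fun G hG => card_le_mul_rpow hxn hB hBdef G hG) d F hF
    set p := 1 + 1 / B
    set m : ℝ := ((multiShadow d F).ncard : ℝ)
    have hp0 : 0 < p := by linarith
    rw [hsize, div_pow, div_mul_eq_mul_div, le_div_iff₀ (by positivity)] at h
    have h2 : (realChoose x n ^ p) ^ d ≤ m ^ p := le_of_mul_le_mul_left h (by positivity)
    have h3 : (realChoose x n ^ p) ^ d = (realChoose x n ^ d) ^ p := by
      rw [← Real.rpow_natCast, ← Real.rpow_mul hb.le, mul_comm, Real.rpow_mul hb.le,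
        Real.rpow_natCast]
    rw [h3] at h2
    exact (Real.rpow_le_rpow_iff (by positivity) (Nat.cast_nonneg _) hp0).1 h2
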